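/- For any short exact sequence 0 → V' →^i V →^j V'' → 0 of finite-dimensional real vector spaces, the dual sequence 0 → (V'')* →^{j*} V* →^{i*} (V')* → 0 is exact, and for nonzero v' ∈ λ(V') and nonzero v'' ∈ λ(V/i(V')), the identity P((λ(i)v' ∧_V v'')*) = P(v''*) ∧_{V*} λ(i*)^{-1} P(v'*) holds in λ(V*), where P denotes the canonical isomorphisms λ(U*) ≅ λ(U)* with sign (-1)^{binom(dim U, 2)}. -/

import Mathlib

open Module TensorProduct Function

noncomputable section

/-- The wedge `v 0 ∧ ... ∧ v (n-1)` as an element of the `n`-th exterior power. -/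
def wedge {V : Type*} [AddCommGroup V] [Module ℝ V] (n : ℕ) (v : Fin n → V) :
    ⋀[ℝ]^n V :=
  ⟨ExteriorAlgebra.ιMulti ℝ n v, ExteriorAlgebra.ιMulti_range ℝ n ⟨v, rfl⟩⟩

/-- `Φ` realizes the canonical isomorphism `λ(V') ⊗ λ(V'') ≅ λ(V)` attached to a short
exact sequence `0 → V' →ⁱ V →ʲ V'' → 0`. -/
def IsSESWedge {V' V V'' : Type*} [AddCommGroup V'] [Module ℝ V'] [AddCommGroup V]
    [Module ℝ V] [AddCommGroup V''] [Module ℝ V'']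
    (k l n : ℕ) (hn : n = k + l) (i : V' →ₗ[ℝ] V) (j : V →ₗ[ℝ] V'')
    (Φ : ((⋀[ℝ]^k V') ⊗[ℝ] (⋀[ℝ]^l V'')) →ₗ[ℝ] ⋀[ℝ]^n V) : Prop :=
  ∀ (v' : Fin k → V') (v : Fin l → V),
    LinearIndependent ℝ v' → LinearIndependent ℝ (j ∘ v) →
      Φ (wedge k v' ⊗ₜ[ℝ] wedge l (j ∘ v)) =
        wedge n (Fin.append (i ∘ v') v ∘ Fin.cast hn)

/-- `P : λ(V*) → λ(V)*` satisfies the determinant formula with the sign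
`(-1)^{n choose 2}`. -/
def IsDetPairing {V : Type*} [AddCommGroup V] [Module ℝ V] (n : ℕ)
    (P : (⋀[ℝ]^n (Module.Dual ℝ V)) →ₗ[ℝ] Module.Dual ℝ (⋀[ℝ]^n V)) : Prop :=
  ∀ (α : Fin n → Module.Dual ℝ V) (v : Fin n → V),
    P (wedge n α) (wedge n v) =
      (-1 : ℝ) ^ (n.choose 2) * Matrix.det (Matrix.of fun a b => α a (v b))

lemma iter_finRotate_val (n k : ℕ) (x : Fin n) :
    ((((finRotate n) ^ k) x : Fin n) : ℕ) = (x + k) % n := by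
  induction k with
  | zero => simp [Nat.mod_eq_of_lt x.2]
  | succ k ih =>
    obtain _ | n := n
    · exact x.elim0
    rw [pow_succ', Equiv.Perm.mul_apply, coe_finRotate]
    split_ifs with h
    · rw [h, Fin.val_last] at ih
      rw [← add_assoc, Nat.add_mod, ← ih]
      simp
    · have h2 : ((((finRotate (n+1)) ^ k) x : Fin (n+1)) : ℕ) < n := Fin.val_lt_last h
      rw [ih] at h2 ⊢
      rw [← add_assoc, ← Nat.mod_add_mod (x + k), Nat.mod_eq_of_lt (a := _ + 1)]
      omega

lemma choose_two_add' (k l : ℕ) :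
    (k + l).choose 2 = k.choose 2 + l.choose 2 + k * l := by
  induction l with
  | zero => simp
  | succ l ih =>
    rw [← add_assoc, Nat.choose_succ_succ' (k + l) 1, Nat.choose_succ_succ' l 1, ih]
    simp
    ring

lemma sign_swap_aux (n k l : ℕ) (hn : n = k + l) :
    ((Equiv.Perm.sign ((finRotate n) ^ k) : ℤˣ) : ℤ) = (-1) ^ (k * l) := by
  rw [map_pow, sign_finRotate, ← pow_mul]
  push_cast
  subst hn
  obtain _ | k := k
  · simp
  have : (k + 1 + l - 1) * (k + 1) = k * (k + 1) + (k + 1) * l := by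
    rw [show k + 1 + l - 1 = k + l by omega]; ring
  rw [this, pow_add, (Nat.even_mul_succ_self k).neg_one_pow, one_mul]

lemma det_swap_aux {V : Type*} [AddCommGroup V] [Module ℝ V] (n k l : ℕ)
    (hn : n = k + l) (hn' : n = l + k) (e : Fin k → V) (f : Fin l → V)
    (p : Fin l → Module.Dual ℝ V) (g : Fin k → Module.Dual ℝ V)
    (hpe : ∀ a b, p a (e b) = 0)
    (hpf : ∀ a b, p a (f b) = (1 : Matrix (Fin l) (Fin l) ℝ) a b)
    (hge : ∀ a b, g a (e b) = (1 : Matrix (Fin k) (Fin k) ℝ) a b) :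
    Matrix.det (Matrix.of fun a b => (Fin.append p g ∘ Fin.cast hn') a
      ((Fin.append e f ∘ Fin.cast hn) b)) = (-1 : ℝ) ^ (k * l) := by
  set M : Matrix (Fin n) (Fin n) ℝ := Matrix.of fun a b => (Fin.append p g ∘ Fin.cast hn') a
      ((Fin.append e f ∘ Fin.cast hn) b) with hM
  set s := (finRotate n) ^ k with hs
  have h1 : (M.submatrix id s).det = 1 := by
    let E : Fin l ⊕ Fin k ≃ Fin n := finSumFinEquiv.trans (finCongr hn'.symm)
    rw [← Matrix.det_submatrix_equiv_self E]
    have hsl : ∀ b : Fin l, Fin.cast hn (s (E (Sum.inl b))) = Fin.natAdd k b := by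
      intro b
      ext
      rw [Fin.val_cast, hs, iter_finRotate_val]
      simp [E]
      rw [Nat.mod_eq_of_lt] <;> omega
    have hsr : ∀ b : Fin k, Fin.cast hn (s (E (Sum.inr b))) = Fin.castAdd l b := by
      intro b
      ext
      rw [Fin.val_cast, hs, iter_finRotate_val]
      simp [E]
      rw [show l + (b : ℕ) + k = b + n by omega, Nat.add_mod_right, Nat.mod_eq_of_lt]
      omega
    have hEl : ∀ b : Fin l, Fin.cast hn' (E (Sum.inl b)) = Fin.castAdd k b := by
      intro b; ext; simp [E]
    have hEr : ∀ b : Fin k, Fin.cast hn' (E (Sum.inr b)) = Fin.natAdd l b := by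
      intro b; ext; simp [E]
    have : (M.submatrix id s).submatrix E E =
        Matrix.fromBlocks 1 0 (Matrix.of fun a b => g a (f b)) 1 := by
      ext a b
      rcases a with a | a <;> rcases b with b | b <;>
        simp only [hM, Matrix.submatrix_apply, Matrix.of_apply, Function.comp_apply, id, hsl, hsr,
          hEl, hEr, Fin.append_left, Fin.append_right, hpe, hpf, hge, Matrix.fromBlocks_apply₁₁,
          Matrix.fromBlocks_apply₁₂, Matrix.fromBlocks_apply₂₁, Matrix.fromBlocks_apply₂₂,
          Matrix.zero_apply]
    rw [this, Matrix.det_fromBlocks_zero₁₂]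
    simp
  rw [Matrix.det_permute', hs, sign_swap_aux n k l hn] at h1
  push_cast at h1
  have h2 : ((-1 : ℝ) ^ (k * l)) * (-1 : ℝ) ^ (k * l) = 1 := by
    rw [← mul_pow]; simp
  linear_combination (-1 : ℝ) ^ (k * l) * h1 - M.det * h2

lemma top_span {V : Type*} [AddCommGroup V] [Module ℝ V] [FiniteDimensional ℝ V]
    (w : ⋀[ℝ]^(finrank ℝ V) V) (hw : w ≠ 0) (x : ⋀[ℝ]^(finrank ℝ V) V) :
    ∃ c : ℝ, c • w = x := by
  have h : finrank ℝ (⋀[ℝ]^(finrank ℝ V) V) = 1 := by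
    rw [exteriorPower.finrank_eq, Nat.choose_self]
  exact (finrank_eq_one_iff_of_nonzero' w hw).1 h x

lemma neg_one_sq_aux (m : ℕ) : ((-1 : ℝ) ^ m) * (-1 : ℝ) ^ m = 1 := by
  rw [← mul_pow]; simp

lemma pairing_basis {V : Type*} [AddCommGroup V] [Module ℝ V] [FiniteDimensional ℝ V]
    (P : (⋀[ℝ]^(finrank ℝ V) (Module.Dual ℝ V)) ≃ₗ[ℝ]
      Module.Dual ℝ (⋀[ℝ]^(finrank ℝ V) V))
    (hP : IsDetPairing (finrank ℝ V) P.toLinearMap) (b : Basis (Fin (finrank ℝ V)) ℝ V)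
    (v : ⋀[ℝ]^(finrank ℝ V) V) (hv : v ≠ 0)
    (a : Module.Dual ℝ (⋀[ℝ]^(finrank ℝ V) V)) (ha : a v = 1) :
    ∃ c : ℝ, c ≠ 0 ∧ v = c • wedge _ b ∧
      P.symm a = (c⁻¹ * (-1 : ℝ) ^ ((finrank ℝ V).choose 2)) • wedge _ b.coord := by
  have h1 : P (wedge _ b.coord) (wedge _ b) = (-1 : ℝ) ^ ((finrank ℝ V).choose 2) := by
    have := hP b.coord b
    rw [LinearEquiv.coe_coe] at this
    rw [this]
    have h : (Matrix.of fun x y => b.coord x (b y)) = (1 : Matrix _ _ ℝ) := by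
      ext x y
      simp [Matrix.one_apply, Finsupp.single_apply, eq_comm]
    rw [h]; simp
  have hw : wedge _ b ≠ 0 := by
    intro h
    rw [h, map_zero] at h1
    exact pow_ne_zero _ (by norm_num) h1.symm
  obtain ⟨c, rfl⟩ := top_span _ hw v
  have hc : c ≠ 0 := by rintro rfl; simp at hv
  refine ⟨c, hc, rfl, ?_⟩
  rw [LinearEquiv.symm_apply_eq]
  refine LinearMap.ext fun x => ?_
  obtain ⟨t, rfl⟩ := top_span _ hw x
  simp only [map_smul, LinearMap.smul_apply, smul_eq_mul] at ha ⊢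
  rw [h1, mul_assoc c⁻¹, neg_one_sq_aux, mul_one]
  field_simp
  linear_combination t * ha

/-- For a short exact sequence `0 → V' →ⁱ V →ʲ V'' → 0` (with `V'' = V / i(V')`), the
dual sequence `0 → (V'')* →^{j*} V* →^{i*} (V')* → 0` is exact, and for nonzero
`v' ∈ λ(V')` and `v'' ∈ λ(V/i(V'))` one has
`𝒫((λ(i)v' ∧_V v'')^*) = 𝒫(v''^*) ∧_{V*} λ(i*)⁻¹ 𝒫(v'^*)` in `λ(V*)`. -/
theorem dual_ses_and_det_pairing_identity
    {V' V : Type*} [AddCommGroup V'] [Module ℝ V'] [AddCommGroup V] [Module ℝ V]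
    [FiniteDimensional ℝ V'] [FiniteDimensional ℝ V]
    (i : V' →ₗ[ℝ] V) (hi : Function.Injective i)
    (hn : finrank ℝ V = finrank ℝ V' + finrank ℝ (V ⧸ LinearMap.range i))
    (hn' : finrank ℝ V = finrank ℝ (V ⧸ LinearMap.range i) + finrank ℝ V')
    (Φ : ((⋀[ℝ]^(finrank ℝ V') V') ⊗[ℝ]
        (⋀[ℝ]^(finrank ℝ (V ⧸ LinearMap.range i)) (V ⧸ LinearMap.range i))) →ₗ[ℝ]
      ⋀[ℝ]^(finrank ℝ V) V)
    (hΦ : IsSESWedge (finrank ℝ V') (finrank ℝ (V ⧸ LinearMap.range i)) (finrank ℝ V)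
      hn i (LinearMap.range i).mkQ Φ)
    (Φd : ((⋀[ℝ]^(finrank ℝ (V ⧸ LinearMap.range i))
          (Module.Dual ℝ (V ⧸ LinearMap.range i))) ⊗[ℝ]
        (⋀[ℝ]^(finrank ℝ V') (Module.Dual ℝ V'))) →ₗ[ℝ]
      ⋀[ℝ]^(finrank ℝ V) (Module.Dual ℝ V))
    (hΦd : IsSESWedge (finrank ℝ (V ⧸ LinearMap.range i)) (finrank ℝ V')
      (finrank ℝ V) hn' ((LinearMap.range i).mkQ).dualMap i.dualMap Φd)
    (PV : (⋀[ℝ]^(finrank ℝ V) (Module.Dual ℝ V)) ≃ₗ[ℝ]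
      Module.Dual ℝ (⋀[ℝ]^(finrank ℝ V) V))
    (hPV : IsDetPairing (finrank ℝ V) PV.toLinearMap)
    (PV' : (⋀[ℝ]^(finrank ℝ V') (Module.Dual ℝ V')) ≃ₗ[ℝ]
      Module.Dual ℝ (⋀[ℝ]^(finrank ℝ V') V'))
    (hPV' : IsDetPairing (finrank ℝ V') PV'.toLinearMap)
    (PQ : (⋀[ℝ]^(finrank ℝ (V ⧸ LinearMap.range i))
        (Module.Dual ℝ (V ⧸ LinearMap.range i))) ≃ₗ[ℝ]
      Module.Dual ℝ (⋀[ℝ]^(finrank ℝ (V ⧸ LinearMap.range i)) (V ⧸ LinearMap.range i)))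
    (hPQ : IsDetPairing (finrank ℝ (V ⧸ LinearMap.range i)) PQ.toLinearMap)
    (v' : ⋀[ℝ]^(finrank ℝ V') V') (hv' : v' ≠ 0)
    (v'' : ⋀[ℝ]^(finrank ℝ (V ⧸ LinearMap.range i)) (V ⧸ LinearMap.range i))
    (hv'' : v'' ≠ 0)
    (a' : Module.Dual ℝ (⋀[ℝ]^(finrank ℝ V') V')) (ha' : a' v' = 1)
    (a'' : Module.Dual ℝ
      (⋀[ℝ]^(finrank ℝ (V ⧸ LinearMap.range i)) (V ⧸ LinearMap.range i)))
    (ha'' : a'' v'' = 1)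
    (A : Module.Dual ℝ (⋀[ℝ]^(finrank ℝ V) V)) (hA : A (Φ (v' ⊗ₜ[ℝ] v'')) = 1) :
    -- the dual sequence is exact
    (Function.Injective ((LinearMap.range i).mkQ).dualMap ∧
     Function.Surjective i.dualMap ∧
     LinearMap.range ((LinearMap.range i).mkQ).dualMap = LinearMap.ker i.dualMap) ∧
    -- the determinant-pairing identity
    PV.symm A = Φd (PQ.symm a'' ⊗ₜ[ℝ] PV'.symm a') := by
  have hsurj : Function.Surjective i.dualMap := LinearMap.dualMap_surjective_of_injective hi
  refine ⟨⟨LinearMap.dualMap_injective_of_surjective (Submodule.mkQ_surjective _), hsurj, ?_⟩, ?_⟩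
  · rw [LinearMap.ker_dualMap_eq_dualAnnihilator_range, Submodule.range_dualMap_mkQ_eq]
  let b' := Module.finBasis ℝ V'
  let bq := Module.finBasis ℝ (V ⧸ LinearMap.range i)
  obtain ⟨c, hc, rfl, hPc⟩ := pairing_basis PV' hPV' b' v' hv' a' ha'
  obtain ⟨d, hd, rfl, hPd⟩ := pairing_basis PQ hPQ bq v'' hv'' a'' ha''
  choose f hf using fun x => Submodule.mkQ_surjective (LinearMap.range i) (bq x)
  choose g hg using fun x => hsurj (b'.coord x)
  have hf' : (LinearMap.range i).mkQ ∘ f = bq := funext hf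
  have hg' : i.dualMap ∘ g = b'.coord := funext hg
  have hw := hΦ b' f b'.linearIndependent (by rw [hf']; exact bq.linearIndependent)
  have li1 : LinearIndependent ℝ b'.coord := by
    have := b'.dualBasis.linearIndependent
    rwa [Basis.coe_dualBasis] at this
  have li2 : LinearIndependent ℝ bq.coord := by
    have := bq.dualBasis.linearIndependent
    rwa [Basis.coe_dualBasis] at this
  have hwd := hΦd bq.coord g li2 (by rw [hg']; exact li1)
  rw [hf'] at hw
  rw [hg'] at hwd
  have hdet := det_swap_aux _ _ _ hn hn' (i ∘ b') f
    (((LinearMap.range i).mkQ).dualMap ∘ bq.coord) g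
    (by
      intro a b
      have : (LinearMap.range i).mkQ (i (b' b)) = 0 := by simp
      simp only [Function.comp_apply, LinearMap.dualMap_apply, this, map_zero])
    (by
      intro a b
      simp only [Function.comp_apply, LinearMap.dualMap_apply, hf]
      simp [Matrix.one_apply, Finsupp.single_apply, eq_comm])
    (by
      intro a b
      have := congrArg (fun t => t (b' b)) (hg a)
      simp only [LinearMap.dualMap_apply] at this
      simp only [Function.comp_apply, this]
      simp [Matrix.one_apply, Finsupp.single_apply, eq_comm])
  have hp := hPV (Fin.append (((LinearMap.range i).mkQ).dualMap ∘ bq.coord) g ∘ Fin.cast hn')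
    (Fin.append (i ∘ b') f ∘ Fin.cast hn)
  rw [hdet, ← hw, ← hwd, LinearEquiv.coe_coe] at hp
  have hch : (finrank ℝ V).choose 2 = (finrank ℝ V').choose 2 +
      (finrank ℝ (V ⧸ LinearMap.range i)).choose 2 +
      finrank ℝ V' * finrank ℝ (V ⧸ LinearMap.range i) := by
    rw [hn, choose_two_add']
  rw [hch] at hp
  rw [LinearEquiv.symm_apply_eq, hPc, hPd]
  simp only [← TensorProduct.smul_tmul', TensorProduct.tmul_smul, map_smul, smul_eq_mul] at hA ⊢
  set w := Φ (wedge _ b' ⊗ₜ[ℝ] wedge _ bq) with hwdef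
  have hw0 : w ≠ 0 := by
    intro h
    rw [h] at hA
    simp at hA
  refine LinearMap.ext fun x => ?_
  obtain ⟨t, rfl⟩ := top_span w hw0 x
  simp only [map_smul, LinearMap.smul_apply, smul_eq_mul]
  rw [hp]
  have h1 := neg_one_sq_aux ((finrank ℝ V').choose 2)
  have h2 := neg_one_sq_aux ((finrank ℝ (V ⧸ LinearMap.range i)).choose 2)
  have h3 := neg_one_sq_aux (finrank ℝ V' * finrank ℝ (V ⧸ LinearMap.range i))
  have hAw : A w = c⁻¹ * d⁻¹ := by
    field_simp
    linear_combination hA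
  rw [hAw, pow_add, pow_add]
  generalize (-1 : ℝ) ^ ((finrank ℝ V').choose 2) = s1 at *
  generalize (-1 : ℝ) ^ ((finrank ℝ (V ⧸ LinearMap.range i)).choose 2) = s2 at *
  generalize (-1 : ℝ) ^ (finrank ℝ V' * finrank ℝ (V ⧸ LinearMap.range i)) = s3 at *
  linear_combination (-(t * c⁻¹ * d⁻¹)) * (h1 + s1 * s1 * h2 + s1 * s1 * s2 * s2 * h3)
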